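/- Let n ≥ 3 and let c ∈ ℝ with c ≠ 0. Consider the curve-germ with semigroup (3,7,11) in ℝ^{2n} (coordinates (p₁,q₁,p₂,q₂,p₃,q₃,…,pₙ,qₙ), all unlisted coordinates equal to 0) f(t) = (t³, t¹⁰ + c t¹¹, t⁷, 0, t¹¹, 0, …, 0). Then Lt(f) = 10. -/

import Mathlib

noncomputable section

/-- The order of vanishing at `0` of a function `h : ℝ → ℝ`: the least `k ≥ 1` such that
the `k`-th derivative of `h` at `0` is nonzero, and `∞` if all derivatives vanish at `0`. -/
def vanishOrder (h : ℝ → ℝ) : ℕ∞ :=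
  sInf {k : ℕ∞ | ∃ m : ℕ, k = m ∧ 1 ≤ m ∧ iteratedDeriv m h 0 ≠ 0}

/-- The standard symplectic form `ω = ∑ dpᵢ ∧ dqᵢ` on `ℝ^{2n}`, where the coordinates are
ordered as `(p₁, q₁, …, pₙ, qₙ)` (so `pᵢ` has index `2(i-1)` and `qᵢ` has index `2(i-1)+1`). -/
def stdSymp (n : ℕ) (u v : Fin (2 * n) → ℝ) : ℝ :=
  ∑ i : Fin n,
    (u ⟨2 * i.val, by have := i.isLt; omega⟩ * v ⟨2 * i.val + 1, by have := i.isLt; omega⟩ -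
     u ⟨2 * i.val + 1, by have := i.isLt; omega⟩ * v ⟨2 * i.val, by have := i.isLt; omega⟩)

/-- A germ at `0` of a smooth Lagrangian submanifold of `(ℝ^{2n}, ω)`, given by `n` smooth
functions `H₁, …, Hₙ` vanishing at `0`, whose differentials are linearly independent at the
points of `{H₁ = ⋯ = Hₙ = 0}` near `0`, and such that `ω` vanishes on `ker DH(x)` at every
such point. -/
structure LagrangianGerm (n : ℕ) : Type where
  H : Fin n → (Fin (2 * n) → ℝ) → ℝ
  smooth : ∀ i, ContDiff ℝ (⊤ : ℕ∞) (H i)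
  zero_at_zero : ∀ i, H i 0 = 0
  lagrangian : ∃ U : Set (Fin (2 * n) → ℝ), IsOpen U ∧ 0 ∈ U ∧
    ∀ x ∈ U, (∀ i, H i x = 0) →
      LinearIndependent ℝ (fun i => fderiv ℝ (H i) x) ∧
      ∀ u v : Fin (2 * n) → ℝ, (∀ i, fderiv ℝ (H i) x u = 0) →
        (∀ i, fderiv ℝ (H i) x v = 0) → stdSymp n u v = 0

/-- The tangency order `t(f, L)` of a curve `f` to a Lagrangian submanifold-germ `L`:
the minimum over `i` of the order of vanishing at `0` of `Hᵢ ∘ f`. -/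
def tOrd {n : ℕ} (f : ℝ → Fin (2 * n) → ℝ) (L : LagrangianGerm n) : ℕ∞ :=
  ⨅ i : Fin n, vanishOrder (fun t => L.H i (f t))

/-- The Lagrangian tangency order `Lt(f)` of a curve `f`. -/
def Lt1 {n : ℕ} (f : ℝ → Fin (2 * n) → ℝ) : ℕ∞ :=
  ⨆ L : LagrangianGerm n, tOrd f L

/-- The Lagrangian tangency order `Lt(f, g)` of a multi-germ of two curves. -/
def Lt2 {n : ℕ} (f g : ℝ → Fin (2 * n) → ℝ) : ℕ∞ :=
  ⨆ L : LagrangianGerm n, min (tOrd f L) (tOrd g L)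

/-- The Lagrangian tangency order `Lt(f, g, h)` of a multi-germ of three curves. -/
def Lt3 {n : ℕ} (f g h : ℝ → Fin (2 * n) → ℝ) : ℕ∞ :=
  ⨆ L : LagrangianGerm n, min (tOrd f L) (min (tOrd g L) (tOrd h L))



open Filter Topology Asymptotics

lemma aux_littleO_apply {E F : Type*} [NormedAddCommGroup E] [NormedSpace ℝ E]
    [NormedAddCommGroup F] [NormedSpace ℝ F] {A : ℝ → E →L[ℝ] F} {v : ℝ → E} {g h : ℝ → ℝ}
    (hA : A =o[𝓝 0] g) (hv : v =O[𝓝 0] h) :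
    (fun t => A t (v t)) =o[𝓝 0] fun t => g t * h t := by
  refine IsBigO.trans_isLittleO (g := fun t => ‖A t‖ * ‖v t‖) ?_ ?_
  · refine IsBigO.of_bound 1 (Eventually.of_forall fun t => ?_)
    simpa using (A t).le_opNorm (v t)
  · exact hA.norm_left.mul_isBigO hv.norm_left

lemma aux_int {F : Type*} [NormedAddCommGroup F] [NormedSpace ℝ F] {g g' : ℝ → F} (n : ℕ)
    (h : ∀ t, HasDerivAt g (g' t) t) (h' : g' =o[𝓝 0] fun t : ℝ => t ^ n) :
    (fun t => g t - g 0) =o[𝓝 0] fun t : ℝ => t ^ (n + 1) := by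
  have := Convex.isLittleO_pow_succ_real (x₀ := (0 : ℝ)) (n := n) convex_univ (Set.mem_univ _)
    (fun x _ => (h x).hasDerivWithinAt) (by simpa using h')
  simpa using this

lemma aux_pow {F : Type*} [NormedAddCommGroup F] [NormedSpace ℝ F] {m k : ℕ} (h : m < k) (p : ℝ → ℝ)
    (hp : ContinuousAt p 0) (v : F) :
    (fun t : ℝ => (t ^ k * p t) • v) =o[𝓝 0] fun t : ℝ => t ^ m := by
  have h1 : (fun t : ℝ => t ^ k) =o[𝓝 0] fun t : ℝ => t ^ m := isLittleO_pow_pow h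
  have h2 : (fun t : ℝ => p t • v) =O[𝓝 0] fun _ : ℝ => (1 : ℝ) :=
    (hp.smul continuousAt_const).isBigO_one ℝ
  have := h1.smul_isBigO h2
  simpa [mul_smul] using this

def fcurve {E : Type} [NormedAddCommGroup E] [NormedSpace ℝ E] (a b d e : E) (c : ℝ) (t : ℝ) : E :=
  t ^ 3 • a + t ^ 7 • b + (t ^ 10 + c * t ^ 11) • d + t ^ 11 • e

def fcurve' {E : Type} [NormedAddCommGroup E] [NormedSpace ℝ E] (a b d e : E) (c : ℝ) (t : ℝ) : E :=
  (3 * t ^ 2) • a + (7 * t ^ 6) • b + (10 * t ^ 9 + c * (11 * t ^ 10)) • d + (11 * t ^ 10) • e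

section
variable {E : Type} [NormedAddCommGroup E] [NormedSpace ℝ E] (a b d e : E) (c : ℝ)
  {F : Type} [NormedAddCommGroup F] [NormedSpace ℝ F]

lemma fcurve_zero : fcurve a b d e c 0 = 0 := by simp [fcurve]

lemma fcurve_deriv (t : ℝ) : HasDerivAt (fcurve a b d e c) (fcurve' a b d e c t) t := by
  have p3 := (hasDerivAt_pow 3 t).smul_const a
  have p7 := (hasDerivAt_pow 7 t).smul_const b
  have p10 := ((hasDerivAt_pow 10 t).add ((hasDerivAt_pow 11 t).const_mul c)).smul_const d
  have p11 := (hasDerivAt_pow 11 t).smul_const e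
  have := ((p3.add p7).add p10).add p11
  simp only [fcurve']
  simpa using! this

lemma fcurve_comp (g : E → F) (hg : ContDiff ℝ (⊤ : ℕ∞) g) (t : ℝ) :
    HasDerivAt (fun t => g (fcurve a b d e c t))
      (fderiv ℝ g (fcurve a b d e c t) (fcurve' a b d e c t)) t :=
  ((hg.differentiable (by simp)).differentiableAt.hasFDerivAt).comp_hasDerivAt t
    (fcurve_deriv a b d e c t)

lemma fcurve'_isBigO : fcurve' a b d e c =O[𝓝 0] fun t : ℝ => t ^ 2 := by
  have : fcurve' a b d e c = fun t => t ^ 2 • ((3:ℝ) • a + (7 * t ^ 4) • b +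
      (10 * t ^ 7 + c * (11 * t ^ 8)) • d + (11 * t ^ 8) • e) := by
    funext t; simp only [fcurve']; module
  rw [this]
  have h2 : (fun t : ℝ => ((3:ℝ) • a + (7 * t ^ 4) • b +
      (10 * t ^ 7 + c * (11 * t ^ 8)) • d + (11 * t ^ 8) • e)) =O[𝓝 0] fun _ : ℝ => (1 : ℝ) :=
    Continuous.continuousAt (by fun_prop) |>.isBigO_one ℝ
  simpa using (isBigO_refl (fun t : ℝ => t ^ 2) (𝓝 0)).smul h2

lemma aux_l3 (g : E → F) (hg : ContDiff ℝ (⊤ : ℕ∞) g) :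
    (fun t => g (fcurve a b d e c t) - g 0) =o[𝓝 0] fun t : ℝ => t ^ 1 := by
  have h := fcurve_comp a b d e c g hg 0
  have h0 : fcurve' a b d e c 0 = 0 := by simp [fcurve']
  rw [h0, map_zero] at h
  have := h.isLittleO
  simpa [fcurve_zero] using this

lemma aux_l2 (g : E → F) (hg : ContDiff ℝ (⊤ : ℕ∞) g) :
    (fun t => g (fcurve a b d e c t) - g 0 - t ^ 3 • fderiv ℝ g 0 a) =o[𝓝 0] fun t : ℝ => t ^ 4 := by
  have l3 := aux_l3 a b d e c (fderiv ℝ g) (hg.fderiv_right (by simp))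
  set D := fderiv ℝ g 0
  have key := aux_int 3 (g := fun t => g (fcurve a b d e c t) - t ^ 3 • D a)
      (g' := fun t => fderiv ℝ g (fcurve a b d e c t) (fcurve' a b d e c t) - (3 * t ^ 2) • D a)
      (fun t => by
        simpa using! (fcurve_comp a b d e c _ hg t).sub ((hasDerivAt_pow 3 t).smul_const (D a)))
      (by
        have e1 := aux_littleO_apply l3 (fcurve'_isBigO a b d e c)
        have e2 := aux_pow (show 3 < 6 by norm_num) (fun _ => (7:ℝ)) (by fun_prop) (D b)
        have e3 := aux_pow (show 3 < 9 by norm_num) (fun t => 10 + c * (11 * t)) (by fun_prop) (D d)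
        have e4 := aux_pow (show 3 < 10 by norm_num) (fun _ => (11:ℝ)) (by fun_prop) (D e)
        have e1' : (fun t => (fderiv ℝ g (fcurve a b d e c t) - D) (fcurve' a b d e c t))
          =o[𝓝 0] fun t : ℝ => t ^ 3 := by
          simpa only [← pow_add] using e1
        refine (((e1'.add e2).add e3).add e4).congr_left fun t => ?_
        simp only [fcurve', sub_apply, map_add, map_smul]
        module)
  refine key.congr_left fun t => ?_
  simp [fcurve_zero]
  module

lemma aux_l1 (g : E → F) (hg : ContDiff ℝ (⊤ : ℕ∞) g) :
    ∃ Q : F, (fun t => g (fcurve a b d e c t) - g 0 - t ^ 3 • fderiv ℝ g 0 a - (t ^ 6 / 2) • Q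
      - t ^ 7 • fderiv ℝ g 0 b) =o[𝓝 0] fun t : ℝ => t ^ 7 := by
  have l2 := aux_l2 a b d e c (fderiv ℝ g) (hg.fderiv_right (by simp))
  set D := fderiv ℝ g 0
  set P : E →L[ℝ] F := fderiv ℝ (fderiv ℝ g) 0 a
  refine ⟨P a, ?_⟩
  have key := aux_int 6 (g := fun t => g (fcurve a b d e c t) - t ^ 3 • D a - (t ^ 6 / 2) • P a
        - t ^ 7 • D b)
      (g' := fun t => fderiv ℝ g (fcurve a b d e c t) (fcurve' a b d e c t) - (3 * t ^ 2) • D a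
        - (6 * t ^ 5 / 2) • P a - (7 * t ^ 6) • D b)
      (fun t => by
        simpa using! (((fcurve_comp a b d e c _ hg t).sub
          ((hasDerivAt_pow 3 t).smul_const (D a))).sub
          (((hasDerivAt_pow 6 t).div_const 2).smul_const (P a))).sub
          ((hasDerivAt_pow 7 t).smul_const (D b)))
      (by
        have e1 := aux_littleO_apply l2 (fcurve'_isBigO a b d e c)
        have e1' : (fun t => (fderiv ℝ g (fcurve a b d e c t) - D - t ^ 3 • P)
          (fcurve' a b d e c t)) =o[𝓝 0] fun t : ℝ => t ^ 6 := by
          simpa only [← pow_add] using e1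
        have e3 := aux_pow (show 6 < 9 by norm_num) (fun t => 10 + c * (11 * t)) (by fun_prop) (D d)
        have e4 := aux_pow (show 6 < 10 by norm_num) (fun _ => (11:ℝ)) (by fun_prop) (D e)
        have e5 := aux_pow (show 6 < 9 by norm_num) (fun _ => (7:ℝ)) (by fun_prop) (P b)
        have e6 := aux_pow (show 6 < 12 by norm_num) (fun t => 10 + c * (11 * t)) (by fun_prop)
          (P d)
        have e7 := aux_pow (show 6 < 13 by norm_num) (fun _ => (11:ℝ)) (by fun_prop) (P e)
        refine (((((e1'.add e3).add e4).add e5).add e6).add e7).congr_left fun t => ?_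
        simp only [fcurve', sub_apply, smul_apply, map_add, map_smul]
        module)
  refine key.congr_left fun t => ?_
  simp [fcurve_zero]
  module

end

lemma aux_taylor {E : Type} [NormedAddCommGroup E] [NormedSpace ℝ E] (a b d e : E) (c : ℝ)
    (H : E → ℝ) (hH : ContDiff ℝ (⊤ : ℕ∞) H) :
    ∃ q : ℝ, (fun t : ℝ => H (fcurve a b d e c t) - H 0 - (t ^ 3 * fderiv ℝ H 0 a
      + t ^ 6 * (fderiv ℝ (fderiv ℝ H) 0 a a / 2) + t ^ 7 * fderiv ℝ H 0 b + t ^ 9 * q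
      + t ^ 10 * (fderiv ℝ H 0 d + fderiv ℝ (fderiv ℝ H) 0 a b))) =o[𝓝 0] fun t : ℝ => t ^ 10 := by
  have hsymm : fderiv ℝ (fderiv ℝ H) 0 b a = fderiv ℝ (fderiv ℝ H) 0 a b := by
    have : IsSymmSndFDerivAt ℝ H 0 := by
      apply (contDiff_infty.1 hH 2).contDiffAt.isSymmSndFDerivAt
      simp
    exact this b a
  obtain ⟨Q, l1⟩ := aux_l1 a b d e c (fderiv ℝ H) (hH.fderiv_right (by simp))
  set D1 := fderiv ℝ H 0
  set D2 := fderiv ℝ (fderiv ℝ H) 0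
  refine ⟨Q a / 6, ?_⟩
  have key := aux_int 9 (g := fun t => H (fcurve a b d e c t) - (t ^ 3 * D1 a
        + t ^ 6 * (D2 a a / 2) + t ^ 7 * D1 b
        + t ^ 9 * (Q a / 6) + t ^ 10 * (D1 d + D2 a b)))
      (g' := fun t => fderiv ℝ H (fcurve a b d e c t) (fcurve' a b d e c t) - (3 * t ^ 2 * D1 a
        + 6 * t ^ 5 * (D2 a a / 2)
        + 7 * t ^ 6 * D1 b + 9 * t ^ 8 * (Q a / 6) + 10 * t ^ 9 * (D1 d + D2 a b)))
      (fun t => by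
        simpa using! (fcurve_comp a b d e c _ hH t).sub
          ((((((hasDerivAt_pow 3 t).mul_const (D1 a)).add
          ((hasDerivAt_pow 6 t).mul_const (D2 a a / 2))).add
          ((hasDerivAt_pow 7 t).mul_const (D1 b))).add
          ((hasDerivAt_pow 9 t).mul_const (Q a / 6))).add
          ((hasDerivAt_pow 10 t).mul_const (D1 d + D2 a b))))
      (by
        have e1 := aux_littleO_apply l1 (fcurve'_isBigO a b d e c)
        have e1' : (fun t => (fderiv ℝ H (fcurve a b d e c t) - D1 - t ^ 3 • D2 a - (t ^ 6 / 2) • Q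
          - t ^ 7 • D2 b) (fcurve' a b d e c t)) =o[𝓝 0] fun t : ℝ => t ^ 9 := by
          simpa only [← pow_add] using e1
        have e2 := aux_pow (show 9 < 10 by norm_num) (fun t =>
          c * 11 * D1 d + 11 * D1 e
          + t ^ 2 * (10 + c * (11 * t)) * D2 a d + t ^ 3 * 11 * D2 a e
          + t ^ 2 / 2 * 7 * Q b + t ^ 5 / 2 * (10 + c * (11 * t)) * Q d
          + t ^ 6 / 2 * 11 * Q e
          + t ^ 3 * 7 * D2 b b + t ^ 6 * (10 + c * (11 * t)) * D2 b d
          + t ^ 7 * 11 * D2 b e) (Continuous.continuousAt (by fun_prop)) (1 : ℝ)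
        refine (e1'.add e2).congr_left fun t => ?_
        simp only [fcurve', sub_apply, smul_apply, map_add, map_smul, smul_eq_mul]
        rw [hsymm]
        ring)
  refine key.congr_left fun t => ?_
  simp [fcurve_zero]
  ring

lemma aux_coef {k : ℕ} {r : ℝ → ℝ} {x : ℝ} (h : (fun t : ℝ => t ^ k * (x + r t)) =o[𝓝 0] fun t : ℝ => t ^ k)
    (hr : Continuous r) (h0 : r 0 = 0) : x = 0 := by
  have h1 : (fun t : ℝ => x + r t) =o[𝓝[≠] 0] fun _ : ℝ => (1 : ℝ) := by
    have h2 := h.mono (nhdsWithin_le_nhds (s := {0}ᶜ))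
    have h3 := (isBigO_refl (fun t : ℝ => (t ^ k)⁻¹) (𝓝[≠] 0)).mul_isLittleO h2
    refine h3.congr' ?_ ?_ <;>
    · filter_upwards [self_mem_nhdsWithin] with t ht
      have : t ^ k ≠ 0 := pow_ne_zero _ ht
      field_simp
  rw [isLittleO_one_iff] at h1
  have h4 : Tendsto (fun t : ℝ => x + r t) (𝓝[≠] 0) (𝓝 (x + r 0)) :=
    (Continuous.tendsto (by fun_prop) 0).mono_left nhdsWithin_le_nhds
  have := tendsto_nhds_unique h1 h4
  rw [h0] at this
  linarith

lemma aux_poly (x3 x6 x7 x9 x10 : ℝ)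
    (h : (fun t : ℝ => t ^ 3 * x3 + t ^ 6 * x6 + t ^ 7 * x7 + t ^ 9 * x9 + t ^ 10 * x10)
      =o[𝓝 0] fun t : ℝ => t ^ 10) : x3 = 0 ∧ x6 = 0 ∧ x7 = 0 ∧ x10 = 0 := by
  have hp : ∀ k ≤ 10, (fun t : ℝ => t ^ 10) =O[𝓝 0] fun t : ℝ => t ^ k := by
    intro k hk
    rcases hk.lt_or_eq with h | h
    · exact (isLittleO_pow_pow h).isBigO
    · subst h; exact isBigO_refl _ _
  have h3 : x3 = 0 := aux_coef (k := 3)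
    (r := fun t => t ^ 3 * x6 + t ^ 4 * x7 + t ^ 6 * x9 + t ^ 7 * x10)
    ((h.trans_isBigO (hp 3 (by norm_num))).congr_left fun t => by ring) (by fun_prop) (by simp)
  subst h3
  have h6 : x6 = 0 := aux_coef (k := 6)
    (r := fun t => t * x7 + t ^ 3 * x9 + t ^ 4 * x10)
    ((h.trans_isBigO (hp 6 (by norm_num))).congr_left fun t => by ring) (by fun_prop) (by simp)
  subst h6
  have h7 : x7 = 0 := aux_coef (k := 7)
    (r := fun t => t ^ 2 * x9 + t ^ 3 * x10)
    ((h.trans_isBigO (hp 7 (by norm_num))).congr_left fun t => by ring) (by fun_prop) (by simp)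
  subst h7
  have h9 : x9 = 0 := aux_coef (k := 9)
    (r := fun t => t * x10)
    ((h.trans_isBigO (hp 9 (by norm_num))).congr_left fun t => by ring) (by fun_prop) (by simp)
  subst h9
  have h10 : x10 = 0 := aux_coef (k := 10)
    (r := fun t => 0)
    (h.congr_left fun t => by ring) (by fun_prop) (by simp)
  exact ⟨rfl, rfl, rfl, h10⟩

lemma aux_extract {E : Type} [NormedAddCommGroup E] [NormedSpace ℝ E] (a b d e : E) (c : ℝ)
    (H : E → ℝ) (hH : ContDiff ℝ (⊤ : ℕ∞) H) (h0 : H 0 = 0) (f : ℝ → E)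
    (hf : f = fun t => t ^ 3 • a + t ^ 7 • b + (t ^ 10 + c * t ^ 11) • d + t ^ 11 • e)
    (hv : ∀ m : ℕ, 1 ≤ m → m ≤ 10 → iteratedDeriv m (fun t => H (f t)) 0 = 0) :
    fderiv ℝ H 0 a = 0 ∧ fderiv ℝ (fderiv ℝ H) 0 a a = 0 ∧ fderiv ℝ H 0 b = 0 ∧
      fderiv ℝ H 0 d + fderiv ℝ (fderiv ℝ H) 0 a b = 0 := by
  have hf2 : f = fcurve a b d e c := hf
  obtain ⟨q, hq⟩ := aux_taylor a b d e c H hH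
  rw [← hf2] at hq
  have hfs : ContDiff ℝ (⊤ : ℕ∞) f := by rw [hf]; fun_prop
  have hs : ContDiff ℝ (10 : ℕ) (fun t => H (f t)) := contDiff_infty.1 (hH.comp hfs) 10
  have ht := taylor_isLittleO_univ (x₀ := 0) hs
  have f0 : f 0 = 0 := by simp [hf]
  have hz : ∀ t, taylorWithinEval (fun t => H (f t)) 10 Set.univ 0 t = 0 := by
    intro t
    rw [taylor_within_apply]
    refine Finset.sum_eq_zero fun k hk => ?_
    rw [iteratedDerivWithin_univ]
    rcases Nat.eq_zero_or_pos k with rfl | hk'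
    · simp [f0, h0]
    · rw [hv k hk' (by simpa [Nat.lt_succ_iff] using hk)]; simp
  simp only [hz, sub_zero] at ht
  have := aux_poly (fderiv ℝ H 0 a) (fderiv ℝ (fderiv ℝ H) 0 a a / 2) (fderiv ℝ H 0 b) q
    (fderiv ℝ H 0 d + fderiv ℝ (fderiv ℝ H) 0 a b) ((ht.sub hq).congr_left fun t => by rw [h0]; ring)
  obtain ⟨h1, h2, h3, h4⟩ := this
  exact ⟨h1, by linarith, h3, h4⟩

lemma aux_surj {n : ℕ} {E : Type} [NormedAddCommGroup E] [NormedSpace ℝ E]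
    (ℓ : Fin n → E →L[ℝ] ℝ) (h : LinearIndependent ℝ ℓ) :
    (ContinuousLinearMap.pi ℓ).range = ⊤ := by
  by_contra hne
  obtain ⟨φ, hφ, hle⟩ := Submodule.exists_le_ker_of_lt_top _ (lt_top_iff_ne_top.2 hne)
  apply hφ
  have hs : ∑ i, φ (Pi.single i 1) • ℓ i = 0 := by
    ext x
    have h1 : φ (ContinuousLinearMap.pi ℓ x) = 0 := hle ⟨x, rfl⟩
    have h2 := LinearMap.pi_apply_eq_sum_univ φ (ContinuousLinearMap.pi ℓ x)
    rw [h1] at h2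
    simp only [ContinuousLinearMap.coe_pi', smul_eq_mul] at h2
    rw [zero_apply, h2]
    simp only [sum_apply, smul_apply, smul_eq_mul]
    refine Finset.sum_congr rfl fun i _ => ?_
    rw [mul_comm]
    congr 2
    ext j
    simp [Pi.single_apply, eq_comm]
  have h0 := Fintype.linearIndependent_iff.1 h _ hs
  refine LinearMap.pi_ext' fun i => ?_
  ext
  simpa using h0 i

lemma aux_curve {n : ℕ} {E : Type} [NormedAddCommGroup E] [NormedSpace ℝ E] [FiniteDimensional ℝ E]
    (H : Fin n → E → ℝ) (hH : ∀ i, ContDiff ℝ (⊤ : ℕ∞) (H i)) (h0 : ∀ i, H i 0 = 0)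
    (hli : LinearIndependent ℝ (fun i => fderiv ℝ (H i) 0)) (a : E)
    (ha : ∀ i, fderiv ℝ (H i) 0 a = 0) :
    ∃ x : ℝ → E, x 0 = 0 ∧ HasDerivAt x a 0 ∧ ∀ᶠ s in 𝓝 (0 : ℝ), ∀ i, H i (x s) = 0 := by
  have : CompleteSpace E := FiniteDimensional.complete ℝ E
  set J : E →L[ℝ] (Fin n → ℝ) := ContinuousLinearMap.pi (fun i => fderiv ℝ (H i) 0) with hJ
  set G : E → Fin n → ℝ := fun x i => H i x with hG
  have hsd : HasStrictFDerivAt G J 0 := by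
    rw [hasStrictFDerivAt_pi']
    intro i
    exact ((hH i).contDiffAt.hasStrictFDerivAt (by simp))
  have hr := aux_surj _ hli
  have hak : a ∈ J.ker := by
    rw [LinearMap.mem_ker]
    ext i
    simpa [hJ] using ha i
  have hG0 : G 0 = 0 := by ext i; exact h0 i
  refine ⟨fun s => hsd.implicitFunction G J hr (G 0) (s • ⟨a, hak⟩), ?_, ?_, ?_⟩
  · simp
  · have h1 := (hsd.to_implicitFunction hr).hasFDerivAt
    have h2 : HasDerivAt (fun s : ℝ => s • (⟨a, hak⟩ : J.ker)) (⟨a, hak⟩ : J.ker) 0 := by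
      simpa using (hasDerivAt_id (0:ℝ)).smul_const (⟨a, hak⟩ : J.ker)
    have h3 : HasFDerivAt (hsd.implicitFunction G J hr (G 0)) J.ker.subtypeL
      ((0:ℝ) • (⟨a, hak⟩ : J.ker)) := by simpa using h1
    simpa using! h3.comp_hasDerivAt (0:ℝ) h2
  · have h1 := hsd.map_implicitFunction_eq hr
    have h2 : Tendsto (fun s : ℝ => (G 0, s • (⟨a, hak⟩ : J.ker))) (𝓝 0) (𝓝 (G 0, 0)) := by
      have : Continuous (fun s : ℝ => (G 0, s • (⟨a, hak⟩ : J.ker))) := by fun_prop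
      simpa using this.tendsto 0
    filter_upwards [h2.eventually h1] with s hs i
    have := congrFun hs i
    rw [hG0] at this ⊢
    simpa [hG] using this

lemma aux_field {n : ℕ} {E : Type} [NormedAddCommGroup E] [NormedSpace ℝ E] [FiniteDimensional ℝ E]
    (H : Fin n → E → ℝ) (hH : ∀ i, ContDiff ℝ (⊤ : ℕ∞) (H i))
    (hli : LinearIndependent ℝ (fun i => fderiv ℝ (H i) 0)) (w : E)
    (hw : ∀ i, fderiv ℝ (H i) 0 w = 0) (x : ℝ → E) (a : E) (hx0 : x 0 = 0)
    (hx : HasDerivAt x a 0) :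
    ∃ (u : ℝ → E) (u' : E), u 0 = w ∧ HasDerivAt u u' 0 ∧
      (∀ᶠ s in 𝓝 (0 : ℝ), ∀ i, fderiv ℝ (H i) (x s) (u s) = 0) ∧
      ∀ i, fderiv ℝ (fderiv ℝ (H i)) 0 a w + fderiv ℝ (H i) 0 u' = 0 := by
  set J : ℝ → E →L[ℝ] (Fin n → ℝ) :=
    fun s => ContinuousLinearMap.pi (fun i => fderiv ℝ (H i) (x s)) with hJ
  have hd : ∀ i, HasDerivAt (fun s => fderiv ℝ (H i) (x s)) (fderiv ℝ (fderiv ℝ (H i)) 0 a) 0 := by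
    intro i
    have h1 : ContDiff ℝ (⊤ : ℕ∞) (fderiv ℝ (H i)) := (hH i).fderiv_right (by simp)
    have h2 := (h1.differentiable (by simp)).differentiableAt.hasFDerivAt (x := x 0)
    have := h2.comp_hasDerivAt (0:ℝ) hx
    rw [hx0] at this
    exact this
  have hJd : DifferentiableAt ℝ J 0 := by
    have : ∀ s, J s = ∑ i, (ContinuousLinearMap.toSpanSingleton ℝ (Pi.single i (1:ℝ) : Fin n → ℝ)).comp
        (fderiv ℝ (H i) (x s)) := by
      intro s
      ext v j
      simp [hJ, Finset.sum_apply, Pi.single_apply]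
    rw [funext this]
    refine DifferentiableAt.fun_sum fun i _ => ?_
    exact (differentiableAt_const _).clm_comp (hd i).differentiableAt
  have hJ0 : J 0 = ContinuousLinearMap.pi (fun i => fderiv ℝ (H i) 0) := by simp [hJ, hx0]
  have hr := aux_surj _ hli
  obtain ⟨R0, hR0⟩ := (J 0 : E →ₗ[ℝ] (Fin n → ℝ)).exists_rightInverse_of_surjective
    (by rw [hJ0]; exact hr)
  set R : (Fin n → ℝ) →L[ℝ] E := LinearMap.toContinuousLinearMap R0
  set A : ℝ → (Fin n → ℝ) →L[ℝ] (Fin n → ℝ) := fun s => (J s).comp R with hA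
  have hA0 : A 0 = 1 := by
    ext1 v
    exact LinearMap.congr_fun hR0 v
  have hAd : DifferentiableAt ℝ A 0 := hJd.clm_comp (differentiableAt_const _)
  have hu0 : IsUnit (A 0) := by rw [hA0]; exact isUnit_one
  have hB : DifferentiableAt ℝ (fun s => Ring.inverse (A s)) 0 := hAd.inverse hu0
  set u : ℝ → E := fun s => w - R (Ring.inverse (A s) (J s w)) with hu
  have hJw : J 0 w = 0 := by
    rw [hJ0]; ext i; simpa using hw i
  have hud : DifferentiableAt ℝ u 0 := by
    have h1 : DifferentiableAt ℝ (fun s => J s w) 0 := hJd.clm_apply (differentiableAt_const _)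
    have h2 := hB.clm_apply h1
    exact (differentiableAt_const _).sub (R.differentiableAt.comp _ h2)
  have hev : ∀ᶠ s in 𝓝 (0 : ℝ), ∀ i, fderiv ℝ (H i) (x s) (u s) = 0 := by
    have : ∀ᶠ s in 𝓝 (0:ℝ), IsUnit (A s) :=
      hAd.continuousAt.eventually (Units.isOpen.mem_nhds hu0)
    filter_upwards [this] with s hs i
    have h1 : J s (u s) = 0 := by
      have h2 := Ring.mul_inverse_cancel _ hs
      have h3 := congrArg (fun T : (Fin n → ℝ) →L[ℝ] (Fin n → ℝ) => T (J s w)) h2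
      simp only [hA] at h3
      simp only [hu, map_sub]
      rw [sub_eq_zero]
      exact h3.symm
    exact congrFun h1 i
  have hu00 : u 0 = w := by simp [hu, hJw]
  refine ⟨u, deriv u 0, hu00, hud.hasDerivAt, hev, fun i => ?_⟩
  have h1 := (hd i).clm_apply hud.hasDerivAt
  have h2 : HasDerivAt (fun s => fderiv ℝ (H i) (x s) (u s)) 0 0 :=
    (hasDerivAt_const (0:ℝ) (0:ℝ)).congr_of_eventuallyEq (by
      filter_upwards [hev] with s hs using hs i)
  have := h1.unique h2
  rw [hu00, hx0] at this
  exact this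

lemma stdSymp_sub {n : ℕ} (u v w : Fin (2 * n) → ℝ) :
    stdSymp n u (v - w) = stdSymp n u v - stdSymp n u w := by
  simp only [stdSymp, Pi.sub_apply]
  rw [← Finset.sum_sub_distrib]
  exact Finset.sum_congr rfl fun i _ => by ring

lemma stdSymp_deriv {n : ℕ} {u v : ℝ → Fin (2 * n) → ℝ} {u' v' : Fin (2 * n) → ℝ}
    (hu : HasDerivAt u u' 0) (hv : HasDerivAt v v' 0) :
    HasDerivAt (fun s => stdSymp n (u s) (v s)) (stdSymp n u' (v 0) + stdSymp n (u 0) v') 0 := by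
  rw [hasDerivAt_pi] at hu hv
  simp only [stdSymp]
  rw [← Finset.sum_add_distrib]
  refine HasDerivAt.fun_sum fun i _ => ?_
  refine (((hu _).mul (hv _)).sub ((hu _).mul (hv _))).congr_deriv ?_
  ring

lemma aux_lagr {n : ℕ} (L : LagrangianGerm n) (a b d : Fin (2 * n) → ℝ)
    (ha : ∀ i, fderiv ℝ (L.H i) 0 a = 0) (hb : ∀ i, fderiv ℝ (L.H i) 0 b = 0)
    (haa : ∀ i, fderiv ℝ (fderiv ℝ (L.H i)) 0 a a = 0)
    (hab : ∀ i, fderiv ℝ (L.H i) 0 d + fderiv ℝ (fderiv ℝ (L.H i)) 0 a b = 0) :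
    stdSymp n a d = 0 := by
  obtain ⟨U, hU, h0U, hL⟩ := L.lagrangian
  obtain ⟨hli, hz⟩ := hL 0 h0U L.zero_at_zero
  obtain ⟨x, hx0, hx, hxL⟩ := aux_curve L.H L.smooth L.zero_at_zero hli a ha
  obtain ⟨u, u', hu0, hu, huL, huu⟩ := aux_field L.H L.smooth hli a ha x a hx0 hx
  obtain ⟨v, v', hv0, hv, hvL, hvv⟩ := aux_field L.H L.smooth hli b hb x a hx0 hx
  have hxU : ∀ᶠ s in 𝓝 (0:ℝ), x s ∈ U :=
    hx.continuousAt.eventually (by rw [hx0]; exact hU.mem_nhds h0U)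
  have h1 := stdSymp_deriv hu hv
  have h2 : HasDerivAt (fun s => stdSymp n (u s) (v s)) 0 0 :=
    (hasDerivAt_const (0:ℝ) (0:ℝ)).congr_of_eventuallyEq (by
      filter_upwards [hxL, huL, hvL, hxU] with s e1 e2 e3 e4
      exact (hL _ e4 e1).2 _ _ e2 e3)
  have h3 := h1.unique h2
  rw [hu0, hv0] at h3
  have h4 : stdSymp n u' b = 0 := hz _ _ (fun i => by have := huu i; rw [haa i] at this; linarith) hb
  have h5 : stdSymp n a (d - v') = 0 := hz _ _ ha (fun i => by
    have := hvv i; have := hab i; rw [map_sub]; linarith)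
  rw [stdSymp_sub] at h5
  linarith

def zeroSection (n : ℕ) : LagrangianGerm n where
  H := fun i x => x ⟨2 * i.val + 1, by have := i.isLt; omega⟩
  smooth := fun i => by fun_prop
  zero_at_zero := fun i => rfl
  lagrangian := by
    refine ⟨Set.univ, isOpen_univ, Set.mem_univ _, fun x _ _ => ?_⟩
    have hfd : ∀ i : Fin n, fderiv ℝ (fun x : Fin (2 * n) → ℝ =>
        x ⟨2 * i.val + 1, by have := i.isLt; omega⟩) x =
        ContinuousLinearMap.proj (R := ℝ) ⟨2 * i.val + 1, by have := i.isLt; omega⟩ := fun i =>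
      (ContinuousLinearMap.proj (R := ℝ) (φ := fun _ : Fin (2 * n) => ℝ)
        ⟨2 * i.val + 1, by have := i.isLt; omega⟩).hasFDerivAt.fderiv
    simp only [hfd, ContinuousLinearMap.proj_apply]
    constructor
    · rw [Fintype.linearIndependent_iff]
      intro g hg i
      have := congrArg (fun T : (Fin (2 * n) → ℝ) →L[ℝ] ℝ =>
        T (Pi.single ⟨2 * i.val + 1, by have := i.isLt; omega⟩ 1)) hg
      simpa [sum_apply, Pi.single_apply, Fin.ext_iff, ← Fin.ext_iff] using this
    · intro u v hu hv
      simp [stdSymp, hu, hv]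

theorem semigroup_3_7_11_class3_lagrangian_tangency_order
    (n : ℕ) (hn : 3 ≤ n) (c : ℝ) (hc : c ≠ 0)
    (f : ℝ → Fin (2 * n) → ℝ)
    (hf : f = fun (t : ℝ) (j : Fin (2 * n)) => if (j : ℕ) = 0 then t ^ 3 else if (j : ℕ) = 1 then t ^ 10 + c * t ^ 11 else if (j : ℕ) = 2 then t ^ 7 else if (j : ℕ) = 4 then t ^ 11 else (0 : ℝ)) :
    Lt1 f = 10 := by
  apply le_antisymm
  · refine iSup_le fun L => ?_
    by_contra hlt
    rw [not_le] at hlt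
    have hv : ∀ i, ∀ m : ℕ, 1 ≤ m → m ≤ 10 → iteratedDeriv m (fun t => L.H i (f t)) 0 = 0 := by
      intro i m h1 h2
      by_contra hne
      have h3 : vanishOrder (fun t => L.H i (f t)) ≤ m := sInf_le ⟨m, rfl, h1, hne⟩
      have h4 : tOrd f L ≤ m := (iInf_le _ i).trans h3
      have h5 : (10 : ℕ∞) < m := hlt.trans_le h4
      have h6 : 10 < m := by exact_mod_cast h5
      omega
    set a : Fin (2 * n) → ℝ := fun j => if (j : ℕ) = 0 then 1 else 0 with ha
    set b : Fin (2 * n) → ℝ := fun j => if (j : ℕ) = 2 then 1 else 0 with hb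
    set d : Fin (2 * n) → ℝ := fun j => if (j : ℕ) = 1 then 1 else 0 with hd
    set e : Fin (2 * n) → ℝ := fun j => if (j : ℕ) = 4 then 1 else 0 with he
    have hf' : f = fun t => t ^ 3 • a + t ^ 7 • b + (t ^ 10 + c * t ^ 11) • d + t ^ 11 • e := by
      rw [hf]
      funext t j
      simp only [ha, hb, hd, he, Pi.add_apply, Pi.smul_apply, smul_eq_mul]
      split_ifs <;> first | omega | ring
    have hx := fun i => aux_extract a b d e c (L.H i) (L.smooth i) (L.zero_at_zero i) f hf' (hv i)
    have h0 := aux_lagr L a b d (fun i => (hx i).1) (fun i => (hx i).2.2.1) (fun i => (hx i).2.1)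
      (fun i => (hx i).2.2.2)
    have h1 : stdSymp n a d = 1 := by
      unfold stdSymp
      rw [Finset.sum_eq_single ⟨0, by omega⟩]
      · simp [ha, hd]
      · intro i _ hi
        have : (i : ℕ) ≠ 0 := fun h => hi (Fin.ext h)
        simp [ha, hd, this]
      · simp
    rw [h1] at h0
    exact one_ne_zero h0
  · refine le_iSup_of_le (zeroSection n) ?_
    refine le_iInf fun i => le_sInf ?_
    rintro k ⟨m, rfl, hm, hne⟩
    by_contra hlt
    rw [not_le] at hlt
    have hlt' : m < 10 := by exact_mod_cast hlt
    apply hne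
    have hc : (fun t => (zeroSection n).H i (f t)) = fun t : ℝ => if (i : ℕ) = 0 then t ^ 10 + c * t ^ 11 else 0 := by
      funext t
      simp only [zeroSection, hf]
      split_ifs <;> first | contradiction | omega | rfl
    rw [hc]
    by_cases hi : (i : ℕ) = 0
    · simp only [hi, if_true]
      rw [iteratedDeriv_fun_add (by fun_prop) (by fun_prop), iteratedDeriv_const_mul_field]
      rw [iteratedDeriv_eq_iterate, iteratedDeriv_eq_iterate, iter_deriv_pow, iter_deriv_pow]
      simp [show 10 - m ≠ 0 by omega, show 11 - m ≠ 0 by omega]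
    · simp [hi]

end
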